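/- arXiv:1703.01384 — 10 statements merged into one kernel-verified Lean document; each statement's English description precedes it below -/
import Mathlib

section
/- Let n ≥ 1 be an integer and κ > 0, and set s(r) = sinh(κr)/κ. Let u : (0,∞) → ℝ be smooth and put w(r) = s(r)^{(n−1)/2} u(r). Then for every r > 0, ( u′(r)² − κ² ((n−1)/2)² u(r)² ) · s(r)^{n−1} = w′(r)² + ((n−1)(n−3)/(4 s(r)²)) w(r)² − d/dr( ((n−1)/2) (s′(r)/s(r)) w(r)² ). -/
/-- Radial energy-density identity of Lemma 4.1 (eq. (4.4)): with `s(r) = sinh(κr)/κ`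
and `w = s^{(n-1)/2} u`, one has
`(u'² - κ²((n-1)/2)² u²) s^{n-1}
  = w'² + ((n-1)(n-3)/(4 s²)) w² - ∂_r( ((n-1)/2)(s'/s) w² )` on `(0,∞)`. -/
theorem stmt_1 (n : ℕ) (hn : 1 ≤ n) (κ : ℝ) (hκ : 0 < κ)
    (s : ℝ → ℝ) (hs : ∀ r, s r = Real.sinh (κ * r) / κ)
    (u : ℝ → ℝ) (hu : ContDiffOn ℝ (⊤ : ℕ∞) u (Set.Ioi 0))
    (w : ℝ → ℝ) (hw : ∀ ρ, w ρ = s ρ ^ (((n : ℝ) - 1) / 2) * u ρ)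
    (r : ℝ) (hr : 0 < r) :
    (deriv u r ^ 2 - κ ^ 2 * (((n : ℝ) - 1) / 2) ^ 2 * u r ^ 2) * s r ^ ((n : ℝ) - 1)
    = deriv w r ^ 2 + (((n : ℝ) - 1) * ((n : ℝ) - 3) / (4 * s r ^ 2)) * w r ^ 2
      - deriv (fun ρ => (((n : ℝ) - 1) / 2) * (deriv s ρ / s ρ) * w ρ ^ 2) r := by
  have hsd : ∀ ρ, HasDerivAt s (Real.cosh (κ * ρ)) ρ := by
    intro ρ
    have h1 : HasDerivAt (fun x : ℝ => κ * x) κ ρ := by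
      simpa using (hasDerivAt_id ρ).const_mul κ
    have h2 := (h1.sinh).div_const κ
    have h3 : s = fun x => Real.sinh (κ * x) / κ := funext hs
    rw [h3]
    exact h2.congr_deriv (mul_div_cancel_right₀ _ hκ.ne')
  have hcd : HasDerivAt (fun x : ℝ => Real.cosh (κ * x)) (Real.sinh (κ * r) * κ) r := by
    have h1 : HasDerivAt (fun x : ℝ => κ * x) κ r := by
      simpa using (hasDerivAt_id r).const_mul κ
    exact h1.cosh
  have hds : deriv s = fun ρ => Real.cosh (κ * ρ) := funext fun ρ => (hsd ρ).deriv
  have hspos : 0 < s r := by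
    rw [hs]
    exact div_pos (Real.sinh_pos_iff.mpr (mul_pos hκ hr)) hκ
  have hud : HasDerivAt u (deriv u r) r :=
    ((hu.contDiffAt (Ioi_mem_nhds hr)).differentiableAt (by simp)).hasDerivAt
  have hwd := ((hsd r).rpow_const (p := ((n : ℝ) - 1) / 2) (Or.inl hspos.ne')).mul hud
  have hwf : w = fun ρ => s ρ ^ (((n : ℝ) - 1) / 2) * u ρ := funext hw
  have hwd' : HasDerivAt w
      (Real.cosh (κ * r) * (((n : ℝ) - 1) / 2) * s r ^ (((n : ℝ) - 1) / 2 - 1) * u r + s r ^ (((n : ℝ) - 1) / 2) * deriv u r) r := by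
    rw [hwf]
    exact hwd
  have hF := (((hcd.div (hsd r) hspos.ne').const_mul (((n : ℝ) - 1) / 2)).mul (hwd'.pow 2))
  have hF' : HasDerivAt (fun ρ => (((n : ℝ) - 1) / 2) * (deriv s ρ / s ρ) * w ρ ^ 2)
      (((n : ℝ) - 1) / 2 * ((Real.sinh (κ * r) * κ * s r - Real.cosh (κ * r) * Real.cosh (κ * r)) / s r ^ 2)
        * w r ^ 2 + ((n : ℝ) - 1) / 2 * (Real.cosh (κ * r) / s r) * (2 * w r *
      (Real.cosh (κ * r) * (((n : ℝ) - 1) / 2) * s r ^ (((n : ℝ) - 1) / 2 - 1) * u r + s r ^ (((n : ℝ) - 1) / 2) * deriv u r))) r := by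
    rw [hds]
    exact hF.congr_deriv (by simp)
  rw [hF'.deriv, hwd'.deriv]
  have hsq : s r ^ ((n : ℝ) - 1) = (s r ^ (((n : ℝ) - 1) / 2)) ^ 2 := by
    rw [← Real.rpow_natCast, ← Real.rpow_mul hspos.le]
    congr 1
    push_cast
    ring
  have hsinh : Real.sinh (κ * r) = κ * s r := by
    rw [hs]
    field_simp
  have hc : Real.cosh (κ * r) ^ 2 = κ ^ 2 * s r ^ 2 + 1 := by
    rw [Real.cosh_sq, hsinh]
    ring
  rw [hsq, Real.rpow_sub_one hspos.ne']
  simp only [Pi.div_apply, Pi.pow_apply, hsinh, hw r]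
  generalize s r ^ (((n : ℝ) - 1) / 2) = A
  generalize Real.cosh (κ * r) = c at *
  generalize deriv u r = v
  generalize u r = y
  generalize s r = σ at *
  generalize (n : ℝ) = m
  have hσ := hspos.ne'
  linear_combination (norm := (field_simp; ring))
    (A ^ 2 * y ^ 2 * (((m - 1) / 2) ^ 2 - (m - 1) / 2) / σ ^ 2) * hc
end

section
/- Fix κ > 0 and λ ∈ ℂ, and set s(r) = sinh(κr)/κ. For j ∈ ℕ and smooth f : (0,∞) → ℂ define Q_j f = −s^{−2j}(s^{2j} f′)′ − (j²κ² + λ²) f. Then for every j ∈ ℕ, every smooth f : (0,∞) → ℂ and every r > 0, Q_{j+1}( s^{−1} f′ )(r) = s(r)^{−1} · (Q_j f)′(r). -/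
/-- Intertwining relation in the proof of Lemma 7.1: with `s(r) = sinh(κr)/κ` and
`Q_j f = -s^{-2j}(s^{2j} f')' - (j²κ² + λ²) f`, one has
`Q_{j+1}(s⁻¹ f') = s⁻¹ (Q_j f)'` on `(0,∞)`. -/
theorem stmt_3 (κ : ℝ) (hκ : 0 < κ) (lam : ℂ)
    (s : ℝ → ℝ) (hs : ∀ r, s r = Real.sinh (κ * r) / κ)
    (Q : ℕ → (ℝ → ℂ) → (ℝ → ℂ))
    (hQ : ∀ j (f : ℝ → ℂ) (r : ℝ),
      Q j f r = -(((s r : ℂ)) ^ (2 * j))⁻¹ *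
          deriv (fun ρ => ((s ρ : ℂ)) ^ (2 * j) * deriv f ρ) r
        - ((j : ℂ) ^ 2 * (κ : ℂ) ^ 2 + lam ^ 2) * f r)
    (j : ℕ) (f : ℝ → ℂ) (hf : ContDiffOn ℝ (⊤ : ℕ∞) f (Set.Ioi 0))
    (r : ℝ) (hr : 0 < r) :
    Q (j + 1) (fun ρ => ((s ρ : ℂ))⁻¹ * deriv f ρ) r
      = ((s r : ℂ))⁻¹ * deriv (Q j f) r := by
  have hκc : (κ : ℂ) ≠ 0 := by exact_mod_cast hκ.ne'
  obtain ⟨C, hC⟩ : ∃ C : ℝ → ℂ, ∀ x, C x = ((Real.cosh (κ * x) : ℝ) : ℂ) := ⟨_, fun _ => rfl⟩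
  obtain ⟨S, hS⟩ : ∃ S : ℝ → ℂ, ∀ x, S x = (s x : ℂ) := ⟨_, fun _ => rfl⟩
  simp only [← hS] at hQ ⊢
  have hlin : ∀ x : ℝ, HasDerivAt (fun y : ℝ => κ * y) κ x := fun x => by
    simpa using (hasDerivAt_id x).const_mul κ
  have hS0 : ∀ x : ℝ, 0 < x → S x ≠ 0 := by
    intro x hx
    rw [hS, hs]
    have : 0 < Real.sinh (κ * x) := Real.sinh_pos_iff.2 (mul_pos hκ hx)
    exact_mod_cast (div_pos this hκ).ne'
  have hSd : ∀ x : ℝ, HasDerivAt S (C x) x := by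
    intro x
    have h := (((hlin x).sinh).div_const κ).ofReal_comp
    have e : S = fun y : ℝ => ((Real.sinh (κ * y) / κ : ℝ) : ℂ) := by
      funext y; rw [hS, hs]
    rw [e, hC]
    convert h using 2
    field_simp
  have hCd : ∀ x : ℝ, HasDerivAt C ((κ : ℂ) ^ 2 * S x) x := by
    intro x
    have h := ((hlin x).cosh).ofReal_comp
    have e : C = fun y : ℝ => ((Real.cosh (κ * y) : ℝ) : ℂ) := funext hC
    rw [e, hS, hs]
    convert h using 1
    push_cast
    field_simp
  have hCS : ∀ x : ℝ, C x ^ 2 = 1 + (κ : ℂ) ^ 2 * S x ^ 2 := by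
    intro x
    rw [hC, hS, hs]
    have := Real.cosh_sq (κ * x)
    rw [← Complex.ofReal_pow, this]
    push_cast
    field_simp
    ring
  have key : ∀ (j : ℕ) (g : ℝ → ℂ) (g2 : ℂ) (x : ℝ), 0 < x → HasDerivAt (deriv g) g2 x →
      Q j g x = -(g2 + 2 * j * (C x / S x) * deriv g x)
        - ((j : ℂ) ^ 2 * (κ : ℂ) ^ 2 + lam ^ 2) * g x := by
    intro j g g2 x hx hg
    have h0 := hS0 x hx
    rw [hQ, (((hSd x).fun_pow (2 * j)).fun_mul hg).deriv]
    congr 1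
    rcases j with _ | j
    · simp
    · have : 2 * (j + 1) - 1 = 2 * j + 1 := by omega
      rw [this]
      push_cast
      field_simp
      ring
  have hsm : ∀ g : ℝ → ℂ, ContDiffOn ℝ (⊤ : ℕ∞) g (Set.Ioi 0) →
      ContDiffOn ℝ (⊤ : ℕ∞) (deriv g) (Set.Ioi 0) := fun g hg =>
    hg.deriv_of_isOpen isOpen_Ioi (by simp)
  have hd : ∀ g : ℝ → ℂ, ContDiffOn ℝ (⊤ : ℕ∞) g (Set.Ioi 0) → ∀ x : ℝ, 0 < x →
      HasDerivAt g (deriv g x) x := fun g hg x hx =>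
    ((hg.differentiableOn (by simp)).differentiableAt (Ioi_mem_nhds hx)).hasDerivAt
  have d0 := hd f hf
  have d1 := hd _ (hsm f hf)
  have d2 := hd _ (hsm _ (hsm f hf))
  have hev : ∀ᶠ x in nhds r, 0 < x := Ioi_mem_nhds hr
  have hr0 := hS0 r hr
  have hg1 : ∀ x : ℝ, 0 < x → deriv (fun ρ => (S ρ)⁻¹ * deriv f ρ) x =
      -C x / S x ^ 2 * deriv f x + (S x)⁻¹ * deriv (deriv f) x := fun x hx =>
    (((hSd x).fun_inv (hS0 x hx)).fun_mul (d1 x hx)).deriv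
  have hg2 := (((((hCd r).fun_neg).fun_div ((hSd r).fun_pow 2) (pow_ne_zero 2 hr0)).fun_mul
    (d1 r hr)).fun_add (((hSd r).fun_inv hr0).fun_mul (d2 r hr))).congr_of_eventuallyEq
    (hev.mono hg1)
  have hQd := (((d2 r hr).fun_add ((((hCd r).fun_div (hSd r) hr0).const_mul
    (2 * (j : ℂ))).fun_mul (d1 r hr))).fun_neg.fun_sub ((d0 r hr).const_mul
    ((j : ℂ) ^ 2 * (κ : ℂ) ^ 2 + lam ^ 2))).congr_of_eventuallyEq
    (hev.mono fun x hx => key j f _ x hx (d1 x hx))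
  rw [key (j + 1) _ _ r hr hg2, hQd.deriv, hg1 r hr]
  have hc := hCS r
  generalize deriv (deriv (deriv f)) r = f3
  generalize deriv (deriv f) r = f2
  generalize deriv f r = f1
  generalize C r = c at *
  generalize S r = t at *
  push_cast
  field_simp
  ring_nf
  try simp only [hc]
  try ring
end

section
/- Fix κ > 0 and λ ∈ ℂ with λ ≠ 0, and set s(r) = sinh(κr)/κ. Define f_0(r) = −e^{iλr}/(2iλ) and recursively f_{j+1}(r) = −(2π s(r))^{−1} f_j′(r) for r > 0. Then each f_j is smooth on (0,∞), and for every j ∈ ℕ and r > 0 one has −s(r)^{−2j} · d/dr( s(r)^{2j} f_j′(r) ) = ( j²κ² + λ² ) f_j(r). -/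
lemma step_aux (S C f g : ℝ → ℂ) (k c n p : ℂ) (hp : p ≠ 0)
    (hS : ∀ r, HasDerivAt S (C r) r) (hC : ∀ r, HasDerivAt C (k ^ 2 * S r) r)
    (hS0 : ∀ r, 0 < r → S r ≠ 0)
    (hf : ContDiffOn ℝ (⊤ : ℕ∞) f (Set.Ioi 0))
    (hg : ContDiffOn ℝ (⊤ : ℕ∞) g (Set.Ioi 0))
    (hgd : ∀ r, 0 < r → deriv f r = -p * (S r * g r))
    (h : ∀ r, 0 < r → S r * deriv (deriv f) r + 2 * n * C r * deriv f r = -c * S r * f r) :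
    ∀ r, 0 < r → S r * deriv (deriv g) r + 2 * (n + 1) * C r * deriv g r
      = -(c + (2 * n + 1) * k ^ 2) * S r * g r := by
  have dif : ∀ u : ℝ → ℂ, ContDiffOn ℝ (⊤ : ℕ∞) u (Set.Ioi 0) → ∀ r, 0 < r →
      HasDerivAt u (deriv u r) r := fun u hu r hr =>
    ((hu.differentiableOn (by simp)).differentiableAt (Ioi_mem_nhds hr)).hasDerivAt
  have hg' : ContDiffOn ℝ (⊤ : ℕ∞) (deriv g) (Set.Ioi 0) :=
    hg.deriv_of_isOpen isOpen_Ioi (by simp)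
  have key : ∀ r, 0 < r → p * (S r * deriv g r + (2 * n + 1) * (C r * g r)) = c * f r := by
    intro r hr
    have e : deriv f =ᶠ[nhds r] fun r => -p * (S r * g r) := by
      filter_upwards [Ioi_mem_nhds hr] with x hx using hgd x hx
    have h2 : deriv (deriv f) r = -p * (C r * g r + S r * deriv g r) := by
      rw [e.deriv_eq]
      exact (((hS r).mul (dif g hg r hr)).const_mul (-p)).deriv
    have h1 := h r hr
    rw [h2, hgd r hr] at h1
    apply mul_left_cancel₀ (hS0 r hr)
    linear_combination -h1
  intro r hr
  have e : (fun r => p * (S r * deriv g r + (2 * n + 1) * (C r * g r))) =ᶠ[nhds r]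
      fun r => c * f r := by
    filter_upwards [Ioi_mem_nhds hr] with x hx using key x hx
  have d1 := ((((hS r).mul (dif _ hg' r hr)).add
    (((hC r).mul (dif g hg r hr)).const_mul (2 * n + 1))).const_mul p).deriv
  have d2 := ((dif f hf r hr).const_mul c).deriv
  have d3 := (d1.symm.trans e.deriv_eq).trans d2
  rw [hgd r hr] at d3
  apply mul_left_cancel₀ hp
  linear_combination d3

open Complex in
/-- Lemma 7.1: the functions `f_0(r) = -e^{iλr}/(2iλ)`,
`f_{j+1}(r) = -(2π s(r))⁻¹ f_j'(r)`, with `s(r) = sinh(κr)/κ`, are smooth on `(0,∞)`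
and satisfy `-s^{-2j}(s^{2j} f_j')' = (j²κ² + λ²) f_j` there. -/
theorem stmt_4 (κ : ℝ) (hκ : 0 < κ) (lam : ℂ) (hlam : lam ≠ 0)
    (s : ℝ → ℝ) (hs : ∀ r, s r = Real.sinh (κ * r) / κ)
    (f : ℕ → ℝ → ℂ)
    (hf0 : ∀ r : ℝ, f 0 r = -Complex.exp (I * lam * r) / (2 * I * lam))
    (hfrec : ∀ (j : ℕ) (r : ℝ), f (j + 1) r = -(2 * Real.pi * s r : ℂ)⁻¹ * deriv (f j) r) :
    (∀ j : ℕ, ContDiffOn ℝ (⊤ : ℕ∞) (f j) (Set.Ioi 0)) ∧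
    (∀ (j : ℕ) (r : ℝ), 0 < r →
      -(((s r : ℂ)) ^ (2 * j))⁻¹ *
          deriv (fun ρ => ((s ρ : ℂ)) ^ (2 * j) * deriv (f j) ρ) r
        = ((j : ℂ) ^ 2 * (κ : ℂ) ^ 2 + lam ^ 2) * f j r) := by
  have hκ' : (κ : ℂ) ≠ 0 := by exact_mod_cast hκ.ne'
  have hsd : ∀ r, HasDerivAt s (Real.cosh (κ * r)) r := by
    intro r
    have e : s = fun r => Real.sinh (κ * r) / κ := funext hs
    rw [e]
    have := (((hasDerivAt_id r).const_mul κ).sinh).div_const κ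
    simp only [id] at this
    refine this.congr_deriv ?_
    field_simp
  have hS : ∀ r, HasDerivAt (fun r => (s r : ℂ)) ((Real.cosh (κ * r) : ℝ) : ℂ) r :=
    fun r => (hsd r).ofReal_comp
  have hC : ∀ r, HasDerivAt (fun r : ℝ => ((Real.cosh (κ * r) : ℝ) : ℂ))
      ((κ : ℂ) ^ 2 * (s r : ℂ)) r := by
    intro r
    have := (((hasDerivAt_id r).const_mul κ).cosh).ofReal_comp
    simp only [id] at this
    refine this.congr_deriv ?_
    rw [hs]
    push_cast
    field_simp
  have hS0 : ∀ r : ℝ, 0 < r → (s r : ℂ) ≠ 0 := by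
    intro r hr
    have : 0 < s r := by
      rw [hs]
      exact div_pos (Real.sinh_pos_iff.2 (mul_pos hκ hr)) hκ
    exact_mod_cast this.ne'
  have hp : (2 * Real.pi : ℂ) ≠ 0 := by
    have := Real.pi_ne_zero
    simp
  have hSs : ContDiff ℝ (⊤ : ℕ∞) (fun r => (s r : ℂ)) := by
    have e : s = fun r => Real.sinh (κ * r) / κ := funext hs
    have : ContDiff ℝ (⊤ : ℕ∞) s := by
      rw [e]
      fun_prop
    exact Complex.ofRealCLM.contDiff.comp this
  have hsm : ∀ j : ℕ, ContDiffOn ℝ (⊤ : ℕ∞) (f j) (Set.Ioi 0) := by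
    intro j
    induction j with
    | zero =>
      have e : f 0 = fun r : ℝ => -Complex.exp (I * lam * r) / (2 * I * lam) := funext hf0
      have h1 : ContDiff ℝ (⊤ : ℕ∞) (fun r : ℝ => (r : ℂ)) := Complex.ofRealCLM.contDiff
      rw [e]
      exact (((contDiff_const.mul h1).cexp).neg.div_const _).contDiffOn
    | succ j ih =>
      have e : f (j + 1) = fun r => -(2 * Real.pi * s r : ℂ)⁻¹ * deriv (f j) r :=
        funext (hfrec j)
      rw [e]
      refine ContDiffOn.mul (ContDiffOn.neg (ContDiffOn.inv
        (contDiff_const.mul hSs).contDiffOn ?_)) (ih.deriv_of_isOpen isOpen_Ioi (by simp))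
      intro x hx
      exact mul_ne_zero hp (hS0 x hx)
  have main : ∀ (j : ℕ) (r : ℝ), 0 < r → (s r : ℂ) * deriv (deriv (f j)) r
      + 2 * (j : ℂ) * ((Real.cosh (κ * r) : ℝ) : ℂ) * deriv (f j) r
      = -((j : ℂ) ^ 2 * (κ : ℂ) ^ 2 + lam ^ 2) * s r * f j r := by
    intro j
    induction j with
    | zero =>
      intro r hr
      have h0 : ∀ a : ℂ, ∀ r : ℝ, HasDerivAt (fun r : ℝ => a * Complex.exp (I * lam * r))
          (a * (I * lam) * Complex.exp (I * lam * r)) r := by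
        intro a r
        have := (((hasDerivAt_id r).ofReal_comp.const_mul (I * lam)).cexp).const_mul a
        simp only [id] at this
        refine this.congr_deriv ?_
        push_cast
        ring
      have e : f 0 = fun r : ℝ => (-1 / (2 * I * lam)) * Complex.exp (I * lam * r) := by
        funext r
        rw [hf0]
        ring
      have e1 : deriv (fun r : ℝ => (-1 / (2 * I * lam)) * Complex.exp (I * lam * r)) = _ :=
        funext fun r => (h0 (-1 / (2 * I * lam)) r).deriv
      rw [e, e1, (h0 _ r).deriv]
      have hI := Complex.I_sq
      push_cast
      linear_combination (s r : ℂ) * (-1 / (2 * I * lam)) * lam ^ 2 *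
        Complex.exp (I * lam * r) * hI
    | succ j ih =>
      intro r hr
      have := step_aux (fun r => (s r : ℂ)) (fun r : ℝ => ((Real.cosh (κ * r) : ℝ) : ℂ))
        (f j) (f (j + 1)) κ _ j (2 * Real.pi) hp hS hC hS0 (hsm j) (hsm (j + 1)) ?_ ih r hr
      · push_cast at this ⊢
        linear_combination this
      · intro r hr
        have := hS0 r hr
        have hpi : (Real.pi : ℂ) ≠ 0 := by exact_mod_cast Real.pi_ne_zero
        rw [hfrec]
        field_simp
  refine ⟨hsm, fun j r hr => ?_⟩
  have hd : HasDerivAt (deriv (f j)) (deriv (deriv (f j)) r) r :=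
    ((((hsm j).deriv_of_isOpen (m := (⊤ : ℕ∞)) isOpen_Ioi (by simp)).differentiableOn
      (by simp)).differentiableAt (Ioi_mem_nhds hr)).hasDerivAt
  have h1 := (((hS r).pow (2 * j)).mul hd).deriv
  have h2 := main j r hr
  have h3 := hS0 r hr
  have h4 : (s r : ℂ) * (((2 * j : ℕ) : ℂ) * (s r : ℂ) ^ (2 * j - 1))
      = 2 * j * (s r : ℂ) ^ (2 * j) := by
    rcases j with _ | j
    · simp
    · rw [show 2 * (j + 1) - 1 = 2 * j + 1 by omega]
      push_cast
      ring
  have h5 : (s r : ℂ) ^ (2 * j) ≠ 0 := pow_ne_zero _ h3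
  have h6 : deriv (fun ρ => ((s ρ : ℂ)) ^ (2 * j) * deriv (f j) ρ) r
      = -(s r : ℂ) ^ (2 * j) * (((j : ℂ) ^ 2 * (κ : ℂ) ^ 2 + lam ^ 2) * f j r) := by
    refine Eq.trans h1 ?_
    apply mul_left_cancel₀ h3
    simp only [Pi.pow_apply]
    linear_combination (s r : ℂ) ^ (2 * j) * h2 +
      ((Real.cosh (κ * r) : ℝ) : ℂ) * deriv (f j) r * h4
  rw [h6]
  field_simp
end

section
/- Let k ≥ 1 be an integer, κ > 0 and σ ∈ ℂ. Define the polynomial v(x) = Σ_{j=0}^{k−1} ((x−1)^j/(2^j j!)) · ∏_{l=1}^{j}( k(k−1) − l(l−1) ) · ∏_{m=j+1}^{k−1}( m − iκ^{−1}σ ), where empty products equal 1. Then for every x ∈ ℝ, d/dx( (1−x²) v′(x) ) + 2 i κ^{−1} σ v′(x) + k(k−1) v(x) = 0. -/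
theorem aux_pow (x : ℝ) (n : ℕ) :
    HasDerivAt (fun t : ℝ => ((t : ℂ) - 1) ^ n) ((n : ℂ) * ((x : ℂ) - 1) ^ (n - 1)) x := by
  have h : HasDerivAt (fun t : ℝ => (t : ℂ) - 1) 1 x :=
    (Complex.ofRealCLM.hasDerivAt (x := x)).sub_const 1
  simpa using h.fun_pow n

theorem aux_ode (k : ℕ) (hk : 1 ≤ k) (s K : ℂ) (a : ℕ → ℂ)
    (hK : K = (k : ℂ) * ((k : ℂ) - 1))
    (ha : ∀ j, j + 1 < k →
      a (j + 1) * (2 * ((j : ℂ) + 1) * ((j : ℂ) + 1 - s)) = a j * (K - (j : ℂ) * ((j : ℂ) + 1)))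
    (v : ℝ → ℂ) (hv : ∀ x : ℝ, v x = ∑ j ∈ Finset.range k, a j * ((x : ℂ) - 1) ^ j) (x : ℝ) :
    deriv (fun t : ℝ => (1 - (t : ℂ) ^ 2) * deriv v t) x + 2 * s * deriv v x + K * v x = 0 := by
  have hd : ∀ t : ℝ, deriv v t
      = ∑ j ∈ Finset.range k, a j * ((j : ℂ) * ((t : ℂ) - 1) ^ (j - 1)) := by
    intro t
    rw [funext hv]
    exact (HasDerivAt.fun_sum fun j _ => (aux_pow t j).const_mul (a j)).deriv
  have he : (fun t : ℝ => (1 - (t : ℂ) ^ 2) * deriv v t) = fun t : ℝ =>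
      ∑ j ∈ Finset.range k,
        (-(a j * j)) * (((t : ℂ) - 1) ^ (j + 1) + 2 * ((t : ℂ) - 1) ^ j) := by
    funext t
    rw [hd, Finset.mul_sum]
    refine Finset.sum_congr rfl fun j _ => ?_
    rcases j with _ | j
    · simp
    · simp only [Nat.add_sub_cancel]
      ring
  have hd2 : deriv (fun t : ℝ => (1 - (t : ℂ) ^ 2) * deriv v t) x = ∑ j ∈ Finset.range k,
        (-(a j * j)) * (((j + 1 : ℕ) : ℂ) * ((x : ℂ) - 1) ^ (j + 1 - 1)
          + 2 * ((j : ℂ) * ((x : ℂ) - 1) ^ (j - 1))) := by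
    rw [he]
    exact (HasDerivAt.fun_sum fun j _ =>
      ((aux_pow x (j + 1)).add ((aux_pow x j).const_mul 2)).const_mul (-(a j * j))).deriv
  rw [hd2, hd, hv, Finset.mul_sum, Finset.mul_sum, ← Finset.sum_add_distrib,
    ← Finset.sum_add_distrib]
  have key : ∀ n, n + 1 ≤ k → ∑ j ∈ Finset.range (n + 1),
      ((-(a j * j)) * (((j + 1 : ℕ) : ℂ) * ((x : ℂ) - 1) ^ (j + 1 - 1)
          + 2 * ((j : ℂ) * ((x : ℂ) - 1) ^ (j - 1)))
        + 2 * s * (a j * ((j : ℂ) * ((x : ℂ) - 1) ^ (j - 1)))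
        + K * (a j * ((x : ℂ) - 1) ^ j))
      = a n * (K - (n : ℂ) * ((n : ℂ) + 1)) * ((x : ℂ) - 1) ^ n := by
    intro n
    induction n with
    | zero => intro _; simp; ring
    | succ n ih =>
      intro hn
      rw [Finset.sum_range_succ, ih (by omega), ← ha n (by omega)]
      simp only [Nat.add_sub_cancel]
      push_cast
      ring
  obtain ⟨n, rfl⟩ : ∃ n, k = n + 1 := ⟨k - 1, by omega⟩
  rw [key n le_rfl, hK]
  push_cast
  ring

open Complex Finset in
/-- Section 2: the explicit polynomial
`v(x) = Σ_{j=0}^{k-1} ((x-1)^j/(2^j j!)) ∏_{l=1}^{j}(k(k-1)-l(l-1)) ∏_{m=j+1}^{k-1}(m-iκ⁻¹σ)`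
solves `((1-x²)v')' + 2iκ⁻¹σ v' + k(k-1) v = 0`. -/
theorem stmt_8 (k : ℕ) (hk : 1 ≤ k) (κ : ℝ) (hκ : 0 < κ) (σ : ℂ)
    (v : ℝ → ℂ)
    (hv : ∀ x : ℝ, v x = ∑ j ∈ range k,
      (((x : ℂ) - 1) ^ j / (2 ^ j * (Nat.factorial j : ℂ))) *
        (∏ l ∈ Icc 1 j, ((k : ℂ) * ((k : ℂ) - 1) - (l : ℂ) * ((l : ℂ) - 1))) *
        (∏ m ∈ Icc (j + 1) (k - 1), ((m : ℂ) - I * (κ : ℂ)⁻¹ * σ))) :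
    ∀ x : ℝ,
      deriv (fun t : ℝ => (1 - (t : ℂ) ^ 2) * deriv v t) x
        + 2 * I * (κ : ℂ)⁻¹ * σ * deriv v x
        + (k : ℂ) * ((k : ℂ) - 1) * v x = 0 := by
  intro x
  have h := aux_ode k hk (I * (κ : ℂ)⁻¹ * σ) ((k : ℂ) * ((k : ℂ) - 1))
    (fun j => 1 / (2 ^ j * (Nat.factorial j : ℂ)) *
        (∏ l ∈ Icc 1 j, ((k : ℂ) * ((k : ℂ) - 1) - (l : ℂ) * ((l : ℂ) - 1))) *
        (∏ m ∈ Icc (j + 1) (k - 1), ((m : ℂ) - I * (κ : ℂ)⁻¹ * σ))) rfl ?_ v ?_ x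
  · rw [← h]
    ring
  · intro j hj
    have h1 : Icc (j + 1) (k - 1) = insert (j + 1) (Icc (j + 1 + 1) (k - 1)) := by
      ext m
      simp only [mem_Icc, mem_insert]
      omega
    have h2 : (j + 1) ∉ Icc (j + 1 + 1) (k - 1) := by simp
    rw [h1, prod_insert h2, prod_Icc_succ_top (by omega), Nat.factorial_succ]
    have hf : (Nat.factorial j : ℂ) ≠ 0 := by exact_mod_cast Nat.factorial_ne_zero j
    have hj1 : (j : ℂ) + 1 ≠ 0 := by exact_mod_cast Nat.succ_ne_zero j
    push_cast
    generalize (∏ l ∈ Icc 1 j, ((k : ℂ) * ((k : ℂ) - 1) - (l : ℂ) * ((l : ℂ) - 1))) = A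
    generalize (∏ m ∈ Icc (j + 1 + 1) (k - 1), ((m : ℂ) - I * (κ : ℂ)⁻¹ * σ)) = B
    generalize I * (κ : ℂ)⁻¹ * σ = s
    field_simp
    ring
  · intro y
    rw [hv]
    refine sum_congr rfl fun j _ => ?_
    ring
end

section
/- Let k ≥ 1 be an integer, κ > 0 and σ ∈ ℂ. Define u_{2k+1}(r;σ) = e^{irσ} Σ_{j=0}^{k−1} ((coth(κr)−1)^j/(2^j j!)) · ∏_{l=1}^{j}( k(k−1) − l(l−1) ) · ∏_{m=j+1}^{k−1}( m − iκ^{−1}σ ), where empty products equal 1. Then for every r > 0, −∂_r² u_{2k+1}(r;σ) + k(k−1) (κ²/sinh²(κr)) u_{2k+1}(r;σ) − σ² u_{2k+1}(r;σ) = 0. -/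
open Polynomial in
theorem aux_poly (k : ℕ) (hk : 1 ≤ k) (s : ℂ) (c : ℕ → ℂ)
    (hc : ∀ j, c j = 1 / (2 ^ j * (Nat.factorial j : ℂ)) *
          (∏ l ∈ Finset.Icc 1 j, ((k : ℂ) * ((k : ℂ) - 1) - (l : ℂ) * ((l : ℂ) - 1))) *
          (∏ m ∈ Finset.Icc (j + 1) (k - 1), ((m : ℂ) - s)))
    (p : ℂ[X]) (hp : p = ∑ j ∈ Finset.range k, C (c j) * X ^ j) :
    derivative (X * (X * derivative p) + C 2 * (X * derivative p))
      - C (2 * s) * derivative p - C ((k : ℂ) * ((k : ℂ) - 1)) * p = 0 := by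
  have hz : ∀ j, k ≤ j → c j = 0 := by
    intro j hj
    rw [hc]
    have : (∏ l ∈ Finset.Icc 1 j, ((k : ℂ) * ((k : ℂ) - 1) - (l : ℂ) * ((l : ℂ) - 1))) = 0 :=
      Finset.prod_eq_zero (Finset.mem_Icc.2 ⟨hk, hj⟩) (by ring)
    rw [this]; ring
  have hcoef : ∀ j, p.coeff j = c j := by
    intro j
    rw [hp, finsetSum_coeff]
    simp only [coeff_C_mul_X_pow]
    rw [Finset.sum_ite_eq]
    split_ifs with h
    · rfl
    · exact (hz j (by simpa using h)).symm
  have hrec : ∀ j : ℕ, 2 * ((j : ℂ) + 1) * ((j : ℂ) + 1 - s) * c (j + 1)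
      = ((k : ℂ) * ((k : ℂ) - 1) - ((j : ℂ) + 1) * j) * c j := by
    intro j
    rcases lt_trichotomy (j + 1) k with h | h | h
    · rw [hc, hc j, Finset.prod_Icc_succ_top (by omega : 1 ≤ j + 1),
        ← Finset.mul_prod_Ioc_eq_prod_Icc (a := j + 1) (b := k - 1) (by omega),
        ← Finset.Icc_add_one_left_eq_Ioc (j+1) (k-1)]
      rw [Nat.factorial_succ]
      have h1 : (Nat.factorial j : ℂ) ≠ 0 := by exact_mod_cast Nat.factorial_ne_zero j
      have h2 : (j : ℂ) + 1 ≠ 0 := by exact_mod_cast Nat.succ_ne_zero j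
      push_cast
      field_simp
      ring
    · rw [hz (j + 1) h.ge]
      subst h
      push_cast; ring
    · rw [hz (j + 1) h.le, hz j (by omega)]; ring
  ext j
  have := hrec j
  simp only [coeff_sub, coeff_add, coeff_derivative, coeff_C_mul, coeff_X_mul, hcoef, coeff_zero]
  cases j with
  | zero => 
    simp only [coeff_X_mul_zero]
    push_cast at this ⊢
    linear_combination this
  | succ n =>
    simp only [coeff_X_mul, coeff_derivative, hcoef]
    push_cast at this ⊢
    linear_combination this

theorem aux_coth (κ : ℝ) (r : ℝ) (h : Real.sinh (κ * r) ≠ 0) :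
    HasDerivAt (fun r : ℝ => (((Real.cosh (κ * r) / Real.sinh (κ * r) : ℝ) : ℂ) - 1))
      (-(κ : ℂ) * ((κ : ℂ) ^ 0 / (Real.sinh (κ * r) : ℂ) ^ 2)) r := by
  have h0 : HasDerivAt (fun r : ℝ => κ * r) κ r := by
    simpa using (hasDerivAt_id r).const_mul κ
  have h1 := ((h0.cosh).div h0.sinh h).ofReal_comp.sub_const 1
  refine h1.congr_deriv ?_
  have h2 := Real.cosh_sq (κ * r)
  have h3 : (Real.sinh (κ * r) * κ * Real.sinh (κ * r) - Real.cosh (κ * r) * (Real.cosh (κ * r) * κ))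
      / Real.sinh (κ * r) ^ 2 = -κ * (κ ^ 0 / Real.sinh (κ * r) ^ 2) := by
    field_simp
    linear_combination (-κ) * h2
  rw [h3, Complex.ofReal_mul, Complex.ofReal_neg, Complex.ofReal_div, Complex.ofReal_pow,
    Complex.ofReal_pow]

open Complex Finset in
/-- Section 2: the explicit outgoing function
`u_{2k+1}(r;σ) = e^{irσ} Σ_{j=0}^{k-1} ((coth(κr)-1)^j/(2^j j!))
  ∏_{l=1}^{j}(k(k-1)-l(l-1)) ∏_{m=j+1}^{k-1}(m-iκ⁻¹σ)`
solves the radial equation `-u'' + k(k-1)(κ²/sinh²(κr)) u - σ² u = 0` on `(0,∞)`. -/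
theorem stmt_9 (k : ℕ) (hk : 1 ≤ k) (κ : ℝ) (hκ : 0 < κ) (σ : ℂ)
    (u : ℝ → ℂ)
    (hu : ∀ r : ℝ, u r = Complex.exp (I * r * σ) *
      ∑ j ∈ range k,
        (((Real.cosh (κ * r) / Real.sinh (κ * r) : ℝ) - 1 : ℂ) ^ j /
            (2 ^ j * (Nat.factorial j : ℂ))) *
          (∏ l ∈ Icc 1 j, ((k : ℂ) * ((k : ℂ) - 1) - (l : ℂ) * ((l : ℂ) - 1))) *
          (∏ m ∈ Icc (j + 1) (k - 1), ((m : ℂ) - I * (κ : ℂ)⁻¹ * σ))) :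
    ∀ r : ℝ, 0 < r →
      -deriv (deriv u) r
        + (k : ℂ) * ((k : ℂ) - 1) *
            ((κ : ℂ) ^ 2 / (Real.sinh (κ * r) : ℂ) ^ 2) * u r
        - σ ^ 2 * u r = 0 := by
  intro r hr
  set s : ℂ := I * (κ : ℂ)⁻¹ * σ with hs
  obtain ⟨c, hc⟩ : ∃ c : ℕ → ℂ, ∀ j, c j = 1 / (2 ^ j * (Nat.factorial j : ℂ)) *
          (∏ l ∈ Finset.Icc 1 j, ((k : ℂ) * ((k : ℂ) - 1) - (l : ℂ) * ((l : ℂ) - 1))) *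
          (∏ m ∈ Finset.Icc (j + 1) (k - 1), ((m : ℂ) - s)) := ⟨_, fun _ => rfl⟩
  obtain ⟨p, hp⟩ : ∃ p : Polynomial ℂ, p = ∑ j ∈ Finset.range k,
      Polynomial.C (c j) * Polynomial.X ^ j := ⟨_, rfl⟩
  have key := aux_poly k hk s c hc p hp
  set x : ℝ → ℂ := fun r => (((Real.cosh (κ * r) / Real.sinh (κ * r) : ℝ) : ℂ) - 1) with hx
  have hu' : u = fun r : ℝ => Complex.exp (I * r * σ) * p.eval (x r) := by
    funext r
    rw [hu, hp, Polynomial.eval_finsetSum]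
    congr 1
    apply Finset.sum_congr rfl
    intro j _
    simp only [Polynomial.eval_mul, Polynomial.eval_C, Polynomial.eval_pow, Polynomial.eval_X]
    rw [hc, hx]
    ring
  have hκ' : (κ : ℂ) ≠ 0 := by exact_mod_cast hκ.ne'
  have hsinh : ∀ r : ℝ, 0 < r → Real.sinh (κ * r) ≠ 0 := fun r hr =>
    (Real.sinh_pos_iff.2 (mul_pos hκ hr)).ne'
  have hq : ∀ r : ℝ, 0 < r → 1 / (Real.sinh (κ * r) : ℂ) ^ 2 = x r * (x r + 2) := by
    intro r hr
    have h1 : (Real.sinh (κ * r) : ℂ) ≠ 0 := by exact_mod_cast hsinh r hr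
    have h2 : (Real.cosh (κ * r) : ℂ) ^ 2 = (Real.sinh (κ * r) : ℂ) ^ 2 + 1 := by
      exact_mod_cast Real.cosh_sq (κ * r)
    simp only [hx]
    rw [Complex.ofReal_div]
    field_simp
    linear_combination -h2
  have hxd : ∀ r : ℝ, 0 < r → HasDerivAt x (-(κ : ℂ) * (x r * (x r + 2))) r := by
    intro r hr
    have := aux_coth κ r (hsinh r hr)
    rw [pow_zero, hq r hr] at this
    exact this
  have hexp : ∀ r : ℝ, HasDerivAt (fun r : ℝ => Complex.exp (I * r * σ))
      (Complex.exp (I * r * σ) * (I * σ)) r := by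
    intro r
    have h1 : HasDerivAt (fun r : ℝ => I * (r : ℂ) * σ) (I * σ) r := by
      simpa using ((Complex.ofRealCLM.hasDerivAt (x := r)).const_mul I).mul_const σ
    exact h1.cexp
  have hgen : ∀ (P : Polynomial ℂ) (r : ℝ), 0 < r →
      HasDerivAt (fun r : ℝ => Complex.exp (I * r * σ) * P.eval (x r))
        (Complex.exp (I * r * σ) * (Polynomial.C (I * σ) * P - Polynomial.C (κ : ℂ) *
          (Polynomial.X * (Polynomial.X * Polynomial.derivative P) + Polynomial.C 2 *
            (Polynomial.X * Polynomial.derivative P))).eval (x r)) r := by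
    intro P r hr
    have h1 : HasDerivAt (fun r : ℝ => P.eval (x r))
        (P.derivative.eval (x r) * (-(κ : ℂ) * (x r * (x r + 2)))) r :=
      (P.hasDerivAt (x r)).comp r (hxd r hr)
    refine ((hexp r).mul h1).congr_deriv ?_
    simp only [Polynomial.eval_sub, Polynomial.eval_add, Polynomial.eval_mul, Polynomial.eval_C,
      Polynomial.eval_X]
    ring
  have hd1 := hgen p
  have hd2 := hgen (Polynomial.C (I * σ) * p - Polynomial.C (κ : ℂ) *
          (Polynomial.X * (Polynomial.X * Polynomial.derivative p) + Polynomial.C 2 *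
            (Polynomial.X * Polynomial.derivative p))) r hr
  have hev := (Filter.eventually_of_mem (Ioi_mem_nhds hr) (fun y hy => (hd1 y hy).deriv))
  have hdd := (Filter.EventuallyEq.deriv_eq hev).trans hd2.deriv
  have e1 : (κ : ℂ) ^ 2 / (Real.sinh (κ * r) : ℂ) ^ 2 = (κ : ℂ) ^ 2 * (x r * (x r + 2)) := by
    rw [← hq r hr]; ring
  rw [e1, hu', hdd]
  have hk2 := congrArg (Polynomial.eval (x r)) key
  have hsσ : I * σ = κ * s := by rw [hs]; field_simp
  have hσ : σ ^ 2 = -(κ * s) ^ 2 := by rw [← hsσ, mul_pow, I_sq]; ring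
  rw [hσ, hsσ]
  beta_reduce
  generalize Complex.exp (I * r * σ) = E
  simp only [Polynomial.derivative_sub, Polynomial.derivative_add, Polynomial.derivative_mul,
    Polynomial.derivative_C, Polynomial.derivative_X, Polynomial.eval_sub, Polynomial.eval_add,
    Polynomial.eval_mul, Polynomial.eval_C, Polynomial.eval_X, Polynomial.eval_zero,
    Polynomial.eval_one] at hk2 ⊢
  linear_combination (-E * κ ^ 2 * (x r * (x r + 2))) * hk2
end

section
/- Let k ≥ 2 be an integer and κ > 0. For every ε > 0 there exists R₀ > 0 such that for every R > R₀ there exists σ ∈ ℂ with |σ + iκ| < ε and u_{2k+1}(R;σ) = 0, where u_{2k+1}(r;σ) = e^{irσ} Σ_{j=0}^{k−1} ((coth(κr)−1)^j/(2^j j!)) · ∏_{l=1}^{j}( k(k−1) − l(l−1) ) · ∏_{m=j+1}^{k−1}( m − iκ^{−1}σ ), with empty products equal to 1. -/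
open Complex Finset Filter Topology in
theorem helper_rouche (F : ℂ → ℂ → ℂ) (hF : Continuous fun p : ℂ × ℂ => F p.1 p.2)
    (hd : ∀ t, Differentiable ℂ (F t)) (z₀ : ℂ) (r : ℝ) (hr : 0 < r) (h0 : F 0 z₀ = 0)
    (hs : ∀ z ∈ Metric.sphere z₀ r, F 0 z ≠ 0) :
    ∀ᶠ t in 𝓝 (0 : ℂ), ∃ z ∈ Metric.closedBall z₀ r, F t z = 0 := by
  have hK : IsCompact (Metric.sphere z₀ r) := isCompact_sphere _ _
  have hne : (Metric.sphere z₀ r).Nonempty := NormedSpace.sphere_nonempty.mpr hr.le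
  have hc0 : Continuous fun z => F 0 z := (hd 0).continuous
  obtain ⟨w, hw, hmin⟩ := hK.exists_isMinOn hne (hc0.norm.continuousOn)
  set δ := ‖F 0 w‖ with hδ
  have hδ0 : 0 < δ := norm_pos_iff.mpr (hs w hw)
  have hct : Continuous fun t => F t z₀ := hF.comp (by fun_prop : Continuous fun t : ℂ => (t, z₀))
  have hct2 : Continuous fun p : ℂ × ℂ => F p.1 z₀ := hct.comp continuous_fst
  have h1 : ∀ᶠ t in 𝓝 (0 : ℂ), ∀ z ∈ Metric.sphere z₀ r, δ / 2 < ‖F t z - F t z₀‖ := by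
    apply hK.eventually_forall_of_forall_eventually
    intro z hz
    have hz' : δ ≤ ‖F 0 z‖ := hmin hz
    have hcc : Continuous fun p : ℂ × ℂ => ‖F p.1 p.2 - F p.1 z₀‖ := (hF.sub hct2).norm
    have := hcc.continuousAt (x := ((0 : ℂ), z))
    refine this.eventually_const_lt ?_
    simp only [h0, sub_zero]
    linarith
  have h2 : ∀ᶠ t in 𝓝 (0 : ℂ), ‖F t z₀‖ < δ / 2 / 2 := by
    refine hct.norm.continuousAt.eventually_lt_const ?_
    simp only [h0, norm_zero]
    linarith
  filter_upwards [h1, h2] with t ht1 ht2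
  have hne' : ∃ᶠ z in 𝓝 z₀, F t z ≠ F t z₀ := by
    intro hev
    simp only [not_not] at hev
    have han : AnalyticOnNhd ℂ (F t) Set.univ := (hd t).differentiableOn.analyticOnNhd isOpen_univ
    have hcon : AnalyticOnNhd ℂ (fun _ : ℂ => F t z₀) Set.univ := analyticOnNhd_const
    have := han.eq_of_eventuallyEq hcon hev
    have h3 := ht1 w hw
    rw [congrFun this w] at h3
    simp at h3
    linarith
  have := (hd t).diffContOnCl.ball_subset_image_closedBall hr (fun z hz => (ht1 z hz).le) hne'
  obtain ⟨z, hz, hz2⟩ := this (show (0 : ℂ) ∈ Metric.ball (F t z₀) (δ / 2 / 2) by simpa using ht2)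
  exact ⟨z, hz, hz2⟩

open Filter Topology in
theorem helper_coth (κ : ℝ) (hκ : 0 < κ) :
    Tendsto (fun r : ℝ => Real.cosh (κ * r) / Real.sinh (κ * r)) atTop (𝓝 1) := by
  have hx : Tendsto (fun r : ℝ => κ * r) atTop atTop := tendsto_id.const_mul_atTop hκ
  have h1 : Tendsto (fun x : ℝ => 1 + Real.exp (-x) * x⁻¹) atTop (𝓝 1) := by
    simpa using (tendsto_const_nhds (x := (1 : ℝ))).add
      ((Real.tendsto_exp_neg_atTop_nhds_zero).mul tendsto_inv_atTop_zero)
  have h2 : Tendsto (fun x : ℝ => Real.cosh x / Real.sinh x) atTop (𝓝 1) := by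
    refine tendsto_of_tendsto_of_tendsto_of_le_of_le' tendsto_const_nhds h1 ?_ ?_
    · filter_upwards [eventually_gt_atTop 0] with x hx
      rw [one_le_div (Real.sinh_pos_iff.mpr hx)]
      exact (Real.sinh_lt_cosh x).le
    · filter_upwards [eventually_gt_atTop 0] with x hx
      have hs := Real.sinh_pos_iff.mpr hx
      have : Real.cosh x / Real.sinh x = 1 + Real.exp (-x) * (Real.sinh x)⁻¹ := by
        rw [← Real.cosh_sub_sinh]; field_simp; ring
      rw [this]
      have h3 : x ≤ Real.sinh x := Real.self_le_sinh_iff.mpr hx.le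
      gcongr
  exact h2.comp hx

open Complex Finset in
/-- Section 2 (via Rouché's theorem): for `k ≥ 2`, spherical obstacles of sufficiently
large radius `R` in `ℍ^{2k+1}_κ` have a resonance `σ` with `|σ + iκ| < ε`, i.e. a zero
of `σ ↦ u_{2k+1}(R;σ)`. -/
theorem stmt_10 (k : ℕ) (hk : 2 ≤ k) (κ : ℝ) (hκ : 0 < κ)
    (u : ℕ → ℝ → ℂ → ℂ)
    (hu : ∀ (r : ℝ) (σ : ℂ), u (2 * k + 1) r σ = Complex.exp (I * r * σ) *
      ∑ j ∈ range k,
        (((Real.cosh (κ * r) / Real.sinh (κ * r) : ℝ) - 1 : ℂ) ^ j /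
            (2 ^ j * (Nat.factorial j : ℂ))) *
          (∏ l ∈ Icc 1 j, ((k : ℂ) * ((k : ℂ) - 1) - (l : ℂ) * ((l : ℂ) - 1))) *
          (∏ m ∈ Icc (j + 1) (k - 1), ((m : ℂ) - I * (κ : ℂ)⁻¹ * σ))) :
    ∀ ε : ℝ, 0 < ε → ∃ R₀ : ℝ, 0 < R₀ ∧
      ∀ R : ℝ, R₀ < R → ∃ σ : ℂ, ‖σ + I * κ‖ < ε ∧ u (2 * k + 1) R σ = 0 := by
  intro ε hε
  let F : ℂ → ℂ → ℂ := fun t σ => ∑ j ∈ range k,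
        (t ^ j / (2 ^ j * (Nat.factorial j : ℂ))) *
          (∏ l ∈ Icc 1 j, ((k : ℂ) * ((k : ℂ) - 1) - (l : ℂ) * ((l : ℂ) - 1))) *
          (∏ m ∈ Icc (j + 1) (k - 1), ((m : ℂ) - I * (κ : ℂ)⁻¹ * σ))
  have hκ' : (κ : ℂ) ≠ 0 := by exact_mod_cast hκ.ne'
  have hF0 : ∀ σ, F 0 σ = ∏ m ∈ Icc 1 (k - 1), ((m : ℂ) - I * (κ : ℂ)⁻¹ * σ) := by
    intro σ
    simp only [F]
    rw [Finset.sum_eq_single 0]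
    · simp
    · intro j _ hj
      simp [hj]
    · intro h
      exact absurd (Finset.mem_range.mpr (by omega)) h
  set r := min ε κ / 2 with hrdef
  have hr : 0 < r := by positivity
  have hrε : r < ε := by have := min_le_left ε κ; linarith
  have hrκ : r < κ := by have := min_le_right ε κ; linarith
  have hfac : ∀ (m : ℕ) (σ : ℂ), (m : ℂ) - I * (κ : ℂ)⁻¹ * σ = 0 → σ + I * κ = - ((m : ℂ) - 1) * (I * κ) := by
    intro m σ h
    have h2 : (m : ℂ) * κ = I * σ := by
      field_simp at h
      linear_combination h
    linear_combination I * h2 + σ * I_mul_I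
  have key := helper_rouche F (by fun_prop) (by intro t; fun_prop) (-(I * κ)) r hr
    (by
      rw [hF0]
      apply Finset.prod_eq_zero (i := 1) (Finset.mem_Icc.mpr ⟨le_rfl, by omega⟩)
      field_simp
      simp)
    (by
      intro z hz
      rw [hF0, Finset.prod_ne_zero_iff]
      intro m hm h
      have h1 := hfac m z h
      have hn : ‖z + I * κ‖ = r := by simpa [dist_eq_norm] using hz
      rw [h1] at hn
      obtain ⟨hm1, -⟩ := Finset.mem_Icc.mp hm
      obtain ⟨n, rfl⟩ : ∃ n, m = n + 1 := ⟨m - 1, by omega⟩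
      have h2 : (n : ℝ) * κ = r := by
        rw [← hn]
        simp [abs_of_pos hκ]
      rcases Nat.eq_zero_or_pos n with h0 | h0
      · subst h0
        simp at h2
        linarith
      · have : (1 : ℝ) ≤ n := by exact_mod_cast h0
        nlinarith)
  have hlim : Filter.Tendsto (fun R : ℝ => (((Real.cosh (κ * R) / Real.sinh (κ * R) : ℝ) : ℂ) - 1)) Filter.atTop (nhds 0) := by
    have := ((continuous_ofReal.tendsto _).comp (helper_coth κ hκ)).sub_const 1
    simpa using this
  obtain ⟨R₀, hR₀⟩ := Filter.eventually_atTop.mp (hlim.eventually key)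
  refine ⟨max R₀ 1, by positivity, fun R hR => ?_⟩
  obtain ⟨z, hz, hz0⟩ := hR₀ R ((le_max_left _ _).trans hR.le)
  refine ⟨z, ?_, ?_⟩
  · have : ‖z + I * κ‖ ≤ r := by simpa [dist_eq_norm] using hz
    linarith
  · rw [hu]
    exact mul_eq_zero_of_right _ hz0
end

section
/- For ρ̃ > 0 and t > 0, set a(ρ̃,t) = (1/(2(t+5))) · log( (cosh(ρ̃t) − 1)/(4(cosh(3ρ̃) − 1)) ). If ρ̃ > 0 satisfies 4 e^{5ρ̃} ( cosh(3ρ̃) − 1 ) < 1/2, then there exists t > 0 such that a(ρ̃,t) > ρ̃/2; in particular A(ρ̃) := sup_{t>0} a(ρ̃,t) > ρ̃/2. -/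
/-- Section 5: if `4e^{5ρ̃}(cosh(3ρ̃)-1) < 1/2`, then there is `t > 0` with
`a(ρ̃,t) > ρ̃/2`, where `a(ρ̃,t) = log((cosh(ρ̃t)-1)/(4(cosh(3ρ̃)-1)))/(2(t+5))`;
in particular `A(ρ̃) = sup_{t>0} a(ρ̃,t) > ρ̃/2`. -/
theorem stmt_14 (a : ℝ → ℝ → ℝ)
    (ha : ∀ ρ t : ℝ, a ρ t =
      (1 / (2 * (t + 5))) * Real.log ((Real.cosh (ρ * t) - 1) / (4 * (Real.cosh (3 * ρ) - 1))))
    (ρ : ℝ) (hρ : 0 < ρ)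
    (hsmall : 4 * Real.exp (5 * ρ) * (Real.cosh (3 * ρ) - 1) < 1 / 2) :
    (∃ t : ℝ, 0 < t ∧ ρ / 2 < a ρ t) ∧
    ρ / 2 < sSup {y : ℝ | ∃ t : ℝ, 0 < t ∧ y = a ρ t} := by
  have hc : 1 < Real.cosh (3 * ρ) := Real.one_lt_cosh.2 (by positivity)
  obtain ⟨K, hK⟩ : ∃ K, K = 4 * (Real.cosh (3 * ρ) - 1) := ⟨_, rfl⟩
  have hK0 : 0 < K := by rw [hK]; linarith
  have hE := Real.exp_pos (5 * ρ)
  have hM : Real.exp (5 * ρ) * K < 1 / 2 := by rw [hK]; linarith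
  have hM0 : 0 < Real.exp (5 * ρ) * K := by positivity
  have ha' : ∀ t, a ρ t = (1 / (2 * (t + 5))) * Real.log ((Real.cosh (ρ * t) - 1) / K) := by
    intro t; rw [ha, hK]
  have hex : ∃ t : ℝ, 0 < t ∧ ρ / 2 < a ρ t := by
    obtain ⟨u, hu⟩ : ∃ u, u = (1 - 2 * (Real.exp (5 * ρ) * K)) / 4 := ⟨_, rfl⟩
    have hu0 : 0 < u := by rw [hu]; linarith
    have hu1 : u < 1 := by rw [hu]; linarith
    have hx : 0 < -Real.log u := by have := Real.log_neg hu0 hu1; linarith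
    refine ⟨-Real.log u / ρ, by positivity, ?_⟩
    have ht : 0 < -Real.log u / ρ := by positivity
    have hxt : ρ * (-Real.log u / ρ) = -Real.log u := by field_simp
    rw [ha']
    generalize -Real.log u / ρ = t at *
    have hlog : ρ * (t + 5) < Real.log ((Real.cosh (ρ * t) - 1) / K) := by
      have h1 : Real.exp (ρ * (t + 5)) < (Real.cosh (ρ * t) - 1) / K := by
        rw [lt_div_iff₀ hK0, mul_add, Real.exp_add, hxt, Real.cosh_eq, neg_neg, Real.exp_neg,
          Real.exp_log hu0, mul_comm ρ 5]
        have h2 : u⁻¹ * Real.exp (5 * ρ) * K = u⁻¹ * ((1 - 4 * u) / 2) := by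
          rw [hu]; ring
        have h3 : (u⁻¹ + u) / 2 - 1 = u⁻¹ * ((1 - u) ^ 2 / 2) := by
          field_simp; ring
        rw [h2, h3]
        have : 0 < u⁻¹ := by positivity
        apply mul_lt_mul_of_pos_left _ this
        nlinarith
      exact (Real.lt_log_iff_exp_lt ((Real.exp_pos _).trans h1)).2 h1
    rw [one_div, inv_mul_eq_div, lt_div_iff₀ (by positivity)]
    linarith
  refine ⟨hex, ?_⟩
  obtain ⟨t, ht, h⟩ := hex
  refine h.trans_le (le_csSup ⟨ρ + |Real.log K|, ?_⟩ ⟨t, ht, rfl⟩)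
  rintro y ⟨s, hs, rfl⟩
  have hc1 : 1 < Real.cosh (ρ * s) := Real.one_lt_cosh.2 (by positivity)
  have hl : Real.log (Real.cosh (ρ * s) - 1) ≤ ρ * s := by
    rw [Real.log_le_iff_le_exp (by linarith), Real.cosh_eq]
    have : Real.exp (-(ρ * s)) ≤ Real.exp (ρ * s) := Real.exp_le_exp.2 (by
      have : 0 < ρ * s := by positivity
      linarith)
    linarith
  rw [ha', one_div, inv_mul_eq_div, div_le_iff₀ (by positivity),
    Real.log_div (by linarith) hK0.ne']
  have h4 := neg_abs_le (Real.log K)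
  have h5 := abs_nonneg (Real.log K)
  have h6 := mul_nonneg h5 hs.le
  have h7 := mul_pos hρ hs
  nlinarith
end

section
/- For ρ̃ > 0 and t > 0, set a(ρ̃,t) = (1/(2(t+5))) · log( (cosh(ρ̃t) − 1)/(4(cosh(3ρ̃) − 1)) ) and A(ρ̃) = sup_{t>0} a(ρ̃,t). Then A(ρ̃) tends to sup_{t>0} log( t²/36 )/(2(t+5)) as ρ̃ → 0⁺. -/
theorem aux_bounds (x : ℝ) (hx : 0 < x) :
    x ^ 2 / 2 ≤ Real.cosh x - 1 ∧ Real.cosh x - 1 ≤ x ^ 2 / 2 * Real.exp x := by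
  have h1 : Real.cosh x - 1 = 2 * Real.sinh (x / 2) ^ 2 := by
    have h := Real.cosh_two_mul (x / 2)
    have h2 := Real.cosh_sq (x / 2)
    rw [show 2 * (x / 2) = x by ring] at h
    linarith
  have h2 : x / 2 ≤ Real.sinh (x / 2) := Real.self_le_sinh_iff.2 (by linarith)
  have h3 : Real.sinh (x / 2) ≤ x / 2 * Real.exp (x / 2) := by
    rw [Real.sinh_eq]
    have h := Real.add_one_le_exp (-x)
    have e : Real.exp (-(x / 2)) = Real.exp (-x) * Real.exp (x / 2) := by
      rw [← Real.exp_add]; congr 1; ring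
    rw [e]
    nlinarith [Real.exp_pos (x / 2)]
  have e : Real.exp x = Real.exp (x / 2) ^ 2 := by
    rw [← Real.exp_nat_mul]; congr 1; push_cast; ring
  rw [h1, e]
  constructor
  · nlinarith
  · have : Real.sinh (x / 2) ^ 2 ≤ (x / 2 * Real.exp (x / 2)) ^ 2 :=
      pow_le_pow_left₀ (by linarith) h3 2
    nlinarith

theorem aux_log (x : ℝ) (hx : 0 < x) :
    Real.log (x ^ 2 / 2) ≤ Real.log (Real.cosh x - 1) ∧
      Real.log (Real.cosh x - 1) ≤ Real.log (x ^ 2 / 2) + x := by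
  obtain ⟨h1, h2⟩ := aux_bounds x hx
  have h0 : 0 < x ^ 2 / 2 := by positivity
  refine ⟨Real.log_le_log h0 h1, ?_⟩
  have h := Real.log_le_log (lt_of_lt_of_le h0 h1) h2
  rwa [Real.log_mul h0.ne' (Real.exp_pos x).ne', Real.log_exp] at h

theorem aux_close (ρ t : ℝ) (hρ : 0 < ρ) (ht : 0 < t) :
    |(1 / (2 * (t + 5))) * Real.log ((Real.cosh (ρ * t) - 1) / (4 * (Real.cosh (3 * ρ) - 1)))
      - Real.log (t ^ 2 / 36) / (2 * (t + 5))| ≤ ρ := by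
  have hρt : 0 < ρ * t := by positivity
  have h3 : 0 < 3 * ρ := by positivity
  obtain ⟨a1, a2⟩ := aux_log _ hρt
  obtain ⟨b1, b2⟩ := aux_log _ h3
  have p1 : 0 < Real.cosh (ρ * t) - 1 := lt_of_lt_of_le (by positivity) (aux_bounds _ hρt).1
  have p2 : 0 < Real.cosh (3 * ρ) - 1 := lt_of_lt_of_le (by positivity) (aux_bounds _ h3).1
  have e1 : Real.log ((Real.cosh (ρ * t) - 1) / (4 * (Real.cosh (3 * ρ) - 1)))
      = Real.log (Real.cosh (ρ * t) - 1) - (Real.log 4 + Real.log (Real.cosh (3 * ρ) - 1)) := by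
    rw [Real.log_div p1.ne' (by positivity), Real.log_mul (by norm_num) p2.ne']
  have e2 : Real.log (t ^ 2 / 36)
      = Real.log ((ρ * t) ^ 2 / 2) - (Real.log 4 + Real.log ((3 * ρ) ^ 2 / 2)) := by
    rw [← Real.log_mul (by norm_num) (by positivity), ← Real.log_div (by positivity) (by positivity)]
    congr 1
    field_simp
    norm_num
  have e3 : (1 / (2 * (t + 5))) * Real.log ((Real.cosh (ρ * t) - 1) / (4 * (Real.cosh (3 * ρ) - 1)))
      - Real.log (t ^ 2 / 36) / (2 * (t + 5)) =
      (Real.log ((Real.cosh (ρ * t) - 1) / (4 * (Real.cosh (3 * ρ) - 1)))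
        - Real.log (t ^ 2 / 36)) / (2 * (t + 5)) := by ring
  have hp : 0 < 2 * (t + 5) := by positivity
  rw [e3, abs_div, abs_of_pos hp, div_le_iff₀ hp, abs_le]
  rw [e1, e2]
  constructor <;> nlinarith

/-- Section 5: with `a(ρ̃,t) = log((cosh(ρ̃t)-1)/(4(cosh(3ρ̃)-1)))/(2(t+5))` and
`A(ρ̃) = sup_{t>0} a(ρ̃,t)`, one has `A(ρ̃) → sup_{t>0} log(t²/36)/(2(t+5))` as
`ρ̃ → 0⁺` (the Euclidean constant `μ`). -/
theorem stmt_16 (a : ℝ → ℝ → ℝ)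
    (ha : ∀ ρ t : ℝ, a ρ t =
      (1 / (2 * (t + 5))) * Real.log ((Real.cosh (ρ * t) - 1) / (4 * (Real.cosh (3 * ρ) - 1))))
    (A : ℝ → ℝ)
    (hA : ∀ ρ : ℝ, A ρ = sSup {y : ℝ | ∃ t : ℝ, 0 < t ∧ y = a ρ t}) :
    Filter.Tendsto A (nhdsWithin 0 (Set.Ioi 0))
      (nhds (sSup {y : ℝ | ∃ t : ℝ, 0 < t ∧ y = Real.log (t ^ 2 / 36) / (2 * (t + 5))})) := by
  set S := {y : ℝ | ∃ t : ℝ, 0 < t ∧ y = Real.log (t ^ 2 / 36) / (2 * (t + 5))} with hS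
  have hb : BddAbove S := by
    refine ⟨1, ?_⟩
    rintro y ⟨t, ht, rfl⟩
    rw [div_le_one (by positivity), show t ^ 2 / 36 = (t / 6) ^ 2 by ring, Real.log_pow]
    have := Real.log_le_sub_one_of_pos (show 0 < t / 6 by positivity)
    push_cast
    linarith
  have hclose : ∀ ρ t : ℝ, 0 < ρ → 0 < t →
      |a ρ t - Real.log (t ^ 2 / 36) / (2 * (t + 5))| ≤ ρ := by
    intro ρ t h1 h2
    rw [ha]
    exact aux_close ρ t h1 h2
  have key : ∀ ρ : ℝ, 0 < ρ → |A ρ - sSup S| ≤ ρ := by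
    intro ρ hρ
    rw [hA]
    have hub : ∀ y ∈ {y : ℝ | ∃ t : ℝ, 0 < t ∧ y = a ρ t}, y ≤ sSup S + ρ := by
      rintro y ⟨t, ht, rfl⟩
      have h1 := (abs_le.1 (hclose ρ t hρ ht)).2
      have h2 : Real.log (t ^ 2 / 36) / (2 * (t + 5)) ≤ sSup S := le_csSup hb ⟨t, ht, rfl⟩
      linarith
    have h1 : sSup {y : ℝ | ∃ t : ℝ, 0 < t ∧ y = a ρ t} ≤ sSup S + ρ :=
      csSup_le ⟨a ρ 1, 1, one_pos, rfl⟩ hub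
    have h2 : sSup S ≤ sSup {y : ℝ | ∃ t : ℝ, 0 < t ∧ y = a ρ t} + ρ := by
      refine csSup_le ⟨_, 1, one_pos, rfl⟩ ?_
      rintro y ⟨t, ht, rfl⟩
      have h1 := (abs_le.1 (hclose ρ t hρ ht)).1
      have h2 : a ρ t ≤ sSup {y : ℝ | ∃ t : ℝ, 0 < t ∧ y = a ρ t} :=
        le_csSup ⟨_, hub⟩ ⟨t, ht, rfl⟩
      linarith
    rw [abs_le]
    constructor <;> linarith
  rw [tendsto_iff_dist_tendsto_zero]
  refine squeeze_zero' (g := fun ρ => ρ) (Filter.Eventually.of_forall fun _ => dist_nonneg) ?_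
    (Filter.tendsto_id.mono_left nhdsWithin_le_nhds)
  filter_upwards [self_mem_nhdsWithin] with ρ hρ
  rw [Real.dist_eq]
  exact key ρ hρ
end

section
/- For ρ̃ > 0 and t > 0, set a(ρ̃,t) = (1/(2(t+5))) · log( (cosh(ρ̃t) − 1)/(4(cosh(3ρ̃) − 1)) ) and A(ρ̃) = sup_{t>0} a(ρ̃,t). Then A is monotonically increasing on (0,∞): if 0 < ρ̃₁ ≤ ρ̃₂ then A(ρ̃₁) ≤ A(ρ̃₂). -/
theorem aux1 (p q : ℝ) (hq : 0 ≤ q) (hpq : q ≤ p) (x : ℝ) (hx : 0 ≤ x) :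
    p * Real.sinh (q * x) ≤ q * Real.sinh (p * x) := by
  have hd : ∀ y : ℝ, HasDerivAt (fun y => q * Real.sinh (p * y) - p * Real.sinh (q * y))
      (q * (Real.cosh (p * y) * (p * 1)) - p * (Real.cosh (q * y) * (q * 1))) y := by
    intro y
    exact ((((hasDerivAt_id y).const_mul p).sinh).const_mul q).sub
      ((((hasDerivAt_id y).const_mul q).sinh).const_mul p)
  have hm : MonotoneOn (fun y => q * Real.sinh (p * y) - p * Real.sinh (q * y)) (Set.Ici 0) := by
    apply monotoneOn_of_deriv_nonneg (convex_Ici 0)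
    · exact fun y _ => (hd y).continuousAt.continuousWithinAt
    · exact fun y _ => (hd y).differentiableAt.differentiableWithinAt
    · intro y hy
      rw [interior_Ici, Set.mem_Ioi] at hy
      rw [(hd y).deriv]
      have h : Real.cosh (q * y) ≤ Real.cosh (p * y) := by
        rw [Real.cosh_le_cosh, abs_of_nonneg (by positivity),
          abs_of_nonneg (mul_nonneg (hq.trans hpq) hy.le)]
        gcongr
      have := mul_le_mul_of_nonneg_left h (mul_nonneg (hq.trans hpq) hq)
      linarith
  have := hm (Set.mem_Ici.2 le_rfl) (Set.mem_Ici.2 hx) hx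
  simp at this
  linarith

theorem aux2 (s t : ℝ) (hs : 0 < s) (hst : s ≤ t) (x y : ℝ) (hx : 0 < x) (hxy : x ≤ y) :
    Real.sinh (t * x) / Real.sinh (s * x) ≤ Real.sinh (t * y) / Real.sinh (s * y) := by
  have hpos : ∀ y : ℝ, 0 < y → 0 < Real.sinh (s * y) := fun y hy =>
    Real.sinh_pos_iff.2 (by positivity)
  have hd : ∀ y : ℝ, 0 < y → HasDerivAt (fun y => Real.sinh (t * y) / Real.sinh (s * y))
      (((Real.cosh (t * y) * (t * 1)) * Real.sinh (s * y) -
        Real.sinh (t * y) * (Real.cosh (s * y) * (s * 1))) / Real.sinh (s * y) ^ 2) y := by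
    intro y hy
    exact (((hasDerivAt_id y).const_mul t).sinh).div
      (((hasDerivAt_id y).const_mul s).sinh) (hpos y hy).ne'
  have hm : MonotoneOn (fun y => Real.sinh (t * y) / Real.sinh (s * y)) (Set.Ioi 0) := by
    apply monotoneOn_of_deriv_nonneg (convex_Ioi 0)
    · exact fun y hy => (hd y hy).continuousAt.continuousWithinAt
    · rw [interior_Ioi]
      exact fun y hy => (hd y hy).differentiableAt.differentiableWithinAt
    · intro y hy
      rw [interior_Ioi, Set.mem_Ioi] at hy
      rw [(hd y hy).deriv]
      apply div_nonneg _ (sq_nonneg _)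
      have h := aux1 (t + s) (t - s) (by linarith) (by linarith) y hy.le
      rw [sub_mul, add_mul t s y, Real.sinh_sub, Real.sinh_add] at h
      linarith
  exact hm hx (hx.trans_le hxy) hxy

theorem aux_cosh (x : ℝ) : Real.cosh x - 1 = 2 * Real.sinh (x / 2) ^ 2 := by
  have h := Real.cosh_two_mul (x / 2)
  have h2 := Real.cosh_sq (x / 2)
  rw [mul_div_cancel₀ x (two_ne_zero)] at h
  linarith

/-- Section 5: `A(ρ̃) = sup_{t>0} a(ρ̃,t)` with
`a(ρ̃,t) = log((cosh(ρ̃t)-1)/(4(cosh(3ρ̃)-1)))/(2(t+5))` is monotonically increasing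
on `(0,∞)`. -/
theorem stmt_17 (a : ℝ → ℝ → ℝ)
    (ha : ∀ ρ t : ℝ, a ρ t =
      (1 / (2 * (t + 5))) * Real.log ((Real.cosh (ρ * t) - 1) / (4 * (Real.cosh (3 * ρ) - 1))))
    (A : ℝ → ℝ)
    (hA : ∀ ρ : ℝ, A ρ = sSup {y : ℝ | ∃ t : ℝ, 0 < t ∧ y = a ρ t}) :
    ∀ ρ₁ ρ₂ : ℝ, 0 < ρ₁ → ρ₁ ≤ ρ₂ → A ρ₁ ≤ A ρ₂ := by
  intro r s hr hrs
  have hs : 0 < s := hr.trans_le hrs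
  have hc : ∀ x : ℝ, 0 < x → 0 < Real.cosh x - 1 := fun x hx => by
    have := Real.one_lt_cosh.2 hx.ne'
    linarith
  have hbdd : BddAbove {y : ℝ | ∃ t : ℝ, 0 < t ∧ y = a s t} := by
    refine ⟨s / 2 + |Real.log (4 * (Real.cosh (3 * s) - 1))|, ?_⟩
    rintro y ⟨t, ht, rfl⟩
    have h1 := hc (s * t) (by positivity)
    have h2 := hc (3 * s) (by positivity)
    rw [ha, Real.log_div h1.ne' (by positivity)]
    have h3 : Real.log (Real.cosh (s * t) - 1) ≤ s * t := by
      rw [Real.log_le_iff_le_exp h1, Real.cosh_eq]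
      have : Real.exp (-(s * t)) ≤ 1 := Real.exp_le_one_iff.2 (by nlinarith)
      have := Real.exp_pos (s * t)
      linarith
    have h4 := neg_abs_le (Real.log (4 * (Real.cosh (3 * s) - 1)))
    have h5 := abs_nonneg (Real.log (4 * (Real.cosh (3 * s) - 1)))
    rw [one_div_mul_eq_div, div_le_iff₀ (by positivity)]
    nlinarith [mul_nonneg h5 ht.le]
  have hle : ∀ t, 0 < t → a s t ≤ A s := fun t ht => by
    rw [hA]; exact le_csSup hbdd ⟨t, ht, rfl⟩
  have hA0 : 0 ≤ A s := by
    refine le_trans ?_ (hle 9 (by norm_num))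
    rw [ha]
    refine mul_nonneg (by norm_num) (Real.log_nonneg ?_)
    have h2 := hc (3 * s) (by positivity)
    rw [one_le_div (by positivity), show s * 9 = 3 * (3 * s) by ring, Real.cosh_three_mul (3 * s)]
    set c := Real.cosh (3 * s)
    nlinarith [mul_pos h2 h2, mul_pos h2 (mul_pos h2 h2)]
  rw [hA r]
  refine csSup_le ⟨_, 1, one_pos, rfl⟩ ?_
  rintro y ⟨t, ht, rfl⟩
  have h2 := hc (3 * r) (by positivity)
  have h2s := hc (3 * s) (by positivity)
  have h1 := hc (r * t) (by positivity)
  rcases le_total t 3 with h | h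
  · refine le_trans ?_ hA0
    rw [ha]
    refine mul_nonpos_of_nonneg_of_nonpos (by positivity) (Real.log_nonpos (by positivity) ?_)
    rw [div_le_one (by positivity)]
    have : Real.cosh (r * t) ≤ Real.cosh (3 * r) := by
      rw [Real.cosh_le_cosh, abs_of_nonneg (by positivity), abs_of_nonneg (by positivity)]
      nlinarith
    linarith
  · refine le_trans ?_ (hle t ht)
    rw [ha, ha]
    refine mul_le_mul_of_nonneg_left (Real.log_le_log (by positivity) ?_) (by positivity)
    have key := aux2 (3 / 2) (t / 2) (by norm_num) (by linarith) r s hr hrs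
    have e : ∀ x : ℝ, (Real.cosh (x * t) - 1) / (4 * (Real.cosh (3 * x) - 1)) =
        (Real.sinh (t / 2 * x) / Real.sinh (3 / 2 * x)) ^ 2 / 4 := by
      intro x
      rw [aux_cosh, aux_cosh, show x * t / 2 = t / 2 * x by ring,
        show 3 * x / 2 = 3 / 2 * x by ring, div_pow, div_div, ← mul_div_mul_left _ _ (two_ne_zero (α := ℝ))]
      rw [← mul_div_mul_left (Real.sinh (t / 2 * x) ^ 2) _ (four_ne_zero (α := ℝ))]
      ring_nf
    rw [e, e]
    have : 0 ≤ Real.sinh (t / 2 * r) / Real.sinh (3 / 2 * r) :=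
      div_nonneg (Real.sinh_nonneg_iff.2 (by positivity)) (Real.sinh_nonneg_iff.2 (by positivity))
    gcongr
end

section
/- Let M ≥ 1 be an integer and let N be the nilpotent M × M Jordan block over ℂ, i.e., the matrix with entries N_{p,q} = 1 if q = p + 1 and N_{p,q} = 0 otherwise (indices 0,…,M−1). Define the linear map T : (ℂ^M)^M → (ℂ^M)^M by T(f_0,…,f_{M−1})_ℓ = Σ_{j=0}^{M−1−ℓ} N^{ℓ+j} f_j for ℓ = 0,…,M−1. Then the image of T has dimension M. -/
/-- Hankel embedding. -/
def hankelMap (M : ℕ) : (Fin M → ℂ) →ₗ[ℂ] (Fin M → Fin M → ℂ) where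
  toFun g := fun l p => if h : (l : ℕ) + (p : ℕ) < M then g ⟨l + p, h⟩ else 0
  map_add' a b := by
    funext l p
    by_cases h : (l : ℕ) + (p : ℕ) < M <;> simp [h]
  map_smul' c a := by
    funext l p
    by_cases h : (l : ℕ) + (p : ℕ) < M <;> simp [h]

theorem hankelMap_apply (M : ℕ) (g : Fin M → ℂ) (l p : Fin M) :
    hankelMap M g l p = if h : (l : ℕ) + (p : ℕ) < M then g ⟨l + p, h⟩ else 0 := rfl

theorem hankelMap_injective (M : ℕ) (hM : 1 ≤ M) : Function.Injective (hankelMap M) := by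
  intro a b hab
  funext k
  have h := congrFun (congrFun hab ⟨0, hM⟩) k
  simpa [hankelMap_apply] using h

theorem jordan_pow_mulVec (M : ℕ) (N : Matrix (Fin M) (Fin M) ℂ)
    (hN : ∀ p q : Fin M, N p q = if (q : ℕ) = (p : ℕ) + 1 then 1 else 0)
    (k : ℕ) (v : Fin M → ℂ) (p : Fin M) :
    (N ^ k).mulVec v p = if h : (p : ℕ) + k < M then v ⟨p + k, h⟩ else 0 := by
  induction k generalizing v p with
  | zero => simp
  | succ k ih =>
    rw [pow_succ, ← Matrix.mulVec_mulVec, ih]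
    have h1 : ∀ q : Fin M, N.mulVec v q = if h : (q : ℕ) + 1 < M then v ⟨q + 1, h⟩ else 0 := by
      intro q
      simp only [Matrix.mulVec, dotProduct, hN, ite_mul, one_mul, zero_mul]
      split_ifs with h
      · rw [Finset.sum_eq_single ⟨q + 1, h⟩]
        · simp
        · intro b _ hb
          rw [if_neg]
          intro h2
          exact hb (Fin.ext h2)
        · simp
      · apply Finset.sum_eq_zero
        intro b _
        rw [if_neg]
        have := b.2
        omega
    by_cases h : (p : ℕ) + (k + 1) < M
    · have h2 : (p : ℕ) + k < M := by omega
      have h3 : (p : ℕ) + k + 1 < M := by omega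
      simp [h, h2, h1, h3, add_assoc]
    · have h3 : ¬ (p : ℕ) + k + 1 < M := by omega
      simp [h, h1, h3]


open Finset in
/-- Linear-algebra claim in the proof of Lemma 7.5: for the nilpotent `M × M` Jordan
block `N`, the map `T(f_0,…,f_{M-1})_ℓ = Σ_{j : ℓ+j ≤ M-1} N^{ℓ+j} f_j` on `M`-tuples
of vectors in `ℂ^M` has image of dimension `M`. -/
theorem stmt_18 (M : ℕ) (hM : 1 ≤ M)
    (N : Matrix (Fin M) (Fin M) ℂ)
    (hN : ∀ p q : Fin M, N p q = if (q : ℕ) = (p : ℕ) + 1 then 1 else 0)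
    (T : (Fin M → Fin M → ℂ) → (Fin M → Fin M → ℂ))
    (hT : ∀ (f : Fin M → Fin M → ℂ) (ℓ : Fin M),
      T f ℓ = ∑ j ∈ Finset.univ.filter (fun j : Fin M => (ℓ : ℕ) + (j : ℕ) < M),
        (N ^ ((ℓ : ℕ) + (j : ℕ))).mulVec (f j)) :
    Module.finrank ℂ (Submodule.span ℂ (Set.range T)) = M := by
  have key : ∀ f : Fin M → Fin M → ℂ, T f = hankelMap M (fun k => ∑ j : Fin M,
      if h : (k : ℕ) + (j : ℕ) < M then f j ⟨k + j, h⟩ else 0) := by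
    intro f
    funext l p
    rw [hT, hankelMap_apply, Finset.sum_apply, Finset.sum_filter]
    simp only [jordan_pow_mulVec M N hN]
    split_ifs with h
    · apply Finset.sum_congr rfl
      intro j _
      by_cases h1 : (l : ℕ) + p + j < M
      · have h2 : (l : ℕ) + j < M := by omega
        have h3 : (p : ℕ) + (l + j) < M := by omega
        have h4 : (p : ℕ) + (l + j) = l + p + j := by omega
        simp [h1, h2, h4]
      · have h3 : ¬ (p : ℕ) + (l + j) < M := by omega
        simp [h1, h3]
    · apply Finset.sum_eq_zero
      intro j _
      have h3 : ¬ (p : ℕ) + (l + j) < M := by omega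
      simp [h3]
  have hr : Set.range T = (LinearMap.range (hankelMap M) : Set (Fin M → Fin M → ℂ)) := by
    ext x
    simp only [Set.mem_range, SetLike.mem_coe, LinearMap.mem_range]
    constructor
    · rintro ⟨f, rfl⟩
      exact ⟨_, (key f).symm⟩
    · rintro ⟨g, rfl⟩
      refine ⟨fun j => if (j : ℕ) = 0 then g else 0, ?_⟩
      rw [key]
      congr 1
      funext k
      rw [Finset.sum_eq_single ⟨0, hM⟩]
      · simp
      · intro b _ hb
        have : (b : ℕ) ≠ 0 := fun h => hb (Fin.ext h)
        simp [this]
      · simp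
  rw [hr, Submodule.span_eq, LinearMap.finrank_range_of_inj (hankelMap_injective M hM)]
  simp
end
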